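/- Let p be a positive integer and q1 > q2 > q3 > q4 ≥ 1 be integers with gcd(p, q_i) = 1 for i = 1,2,3,4. If the four rational Beatty sequences S(p/q_i, β_i), i = 1,2,3,4, form a disjoint covering system of the integers, then q2 = 2·q3. -/

import Mathlib

/-- The Beatty sequence `S(α, β) = {⌊α n + β⌋ : n ∈ ℤ}`. -/
def beattySet (α β : ℝ) : Set ℤ :=
  {m : ℤ | ∃ n : ℤ, m = ⌊α * n + β⌋}

/-!
Modulo `p`, the sequence `S(p/q, β)` is an arithmetic progression of length `q` and difference
`-1/q`, so a disjoint covering system is a partition of `ℤ/p` into such progressions. At the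
frequency `qⱼ`, the Fourier coefficient of the `i`-th progression has modulus proportional to
`1 / sin (π dᵢ / p)`, where `dᵢ` is the distance from `qⱼ / qᵢ` to `0` in `ℤ/p`; in particular
`dⱼ = 1`. These coefficients sum to `0`, and the `dᵢ` are distinct. If no `dᵢ` were `2`, the
inequality `1 / sin 3x + 1 / sin 4x + 1 / sin 5x < 1 / sin x` at `x = π / p` would prevent the other
three coefficients from cancelling the `j`-th one. Hence every `qⱼ` is `± 2 qᵢ` modulo `p` for some
`i`. Multiplying these four relations gives `2 ^ 4 = ± 1` modulo `p`, that is, `p = 15` or `p = 17`,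
and since the `qᵢ` sum to `p`, only `p = 15` with `(8, 4, 2, 1)` survives.
-/

open Finset Real

section Trigonometry

theorem eight_thirds_mul_sin_le_sin_three_mul {x : ℝ} (hx : 0 ≤ x) (hx' : x ≤ 2 / 7) :
    8 / 3 * sin x ≤ sin (3 * x) := by
  have hsin : 0 ≤ sin x := sin_nonneg_of_nonneg_of_le_pi hx (by linarith [pi_gt_three])
  have hsin' : sin x ≤ 2 / 7 := (sin_le hx).trans hx'
  calc 8 / 3 * sin x ≤ (3 - 4 * sin x ^ 2) * sin x := by gcongr; nlinarith
    _ = sin (3 * x) := by rw [sin_three_mul]; ring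

theorem sixteen_fifths_mul_sin_le_sin_four_mul {x : ℝ} (hx : 0 ≤ x) (hx' : x ≤ 2 / 7) :
    16 / 5 * sin x ≤ sin (4 * x) := by
  have hsin : 0 ≤ sin x := sin_nonneg_of_nonneg_of_le_pi hx (by linarith [pi_gt_three])
  have hcos : 47 / 49 ≤ cos x := by nlinarith [one_sub_sq_div_two_le_cos (x := x)]
  calc 16 / 5 * sin x ≤ 4 * cos x * (2 * cos x ^ 2 - 1) * sin x := by gcongr; nlinarith
    _ = sin (4 * x) := by
      rw [show 4 * x = 2 * (2 * x) by ring, sin_two_mul, sin_two_mul, cos_two_mul]; ring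

theorem ten_thirds_mul_sin_le_sin_five_mul {x : ℝ} (hx : 0 ≤ x) (hx' : x ≤ 2 / 7) :
    10 / 3 * sin x ≤ sin (5 * x) := by
  have hsin : 0 ≤ sin x := sin_nonneg_of_nonneg_of_le_pi hx (by linarith [pi_gt_three])
  have hsin' : sin x ≤ 2 / 7 := (sin_le hx).trans hx'
  calc 10 / 3 * sin x ≤ (16 * (sin x ^ 2) ^ 2 - 20 * sin x ^ 2 + 5) * sin x := by
        gcongr; nlinarith [sq_nonneg (sin x ^ 2)]
    _ = sin (5 * x) := by
      rw [show 5 * x = 3 * x + 2 * x by ring, sin_add, sin_three_mul, cos_three_mul, sin_two_mul,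
        cos_two_mul]
      linear_combination -8 * sin x * (cos x ^ 2 + 1 - 2 * sin x ^ 2) * sin_sq_add_cos_sq x

theorem inv_sin_three_four_five_mul_lt {x : ℝ} (hx : 0 < x) (hx' : x ≤ 2 / 7) :
    (sin (3 * x))⁻¹ + (sin (4 * x))⁻¹ + (sin (5 * x))⁻¹ < (sin x)⁻¹ := by
  have hsin : 0 < sin x := sin_pos_of_pos_of_lt_pi hx (by linarith [pi_gt_three])
  calc (sin (3 * x))⁻¹ + (sin (4 * x))⁻¹ + (sin (5 * x))⁻¹
      ≤ (8 / 3 * sin x)⁻¹ + (16 / 5 * sin x)⁻¹ + (10 / 3 * sin x)⁻¹ := by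
        gcongr
        · exact eight_thirds_mul_sin_le_sin_three_mul hx.le hx'
        · exact sixteen_fifths_mul_sin_le_sin_four_mul hx.le hx'
        · exact ten_thirds_mul_sin_le_sin_five_mul hx.le hx'
    _ = 79 / 80 * (sin x)⁻¹ := by simp only [mul_inv]; ring
    _ < (sin x)⁻¹ := by linarith [inv_pos.2 hsin]

theorem mul_pi_div_le_pi_div_two {p n : ℕ} [NeZero p] (hn : n ≤ p / 2) :
    n * (π / p) ≤ π / 2 := by
  have hp : (0 : ℝ) < p := Nat.cast_pos.2 (NeZero.pos p)
  have hn' : (n : ℝ) * 2 ≤ p := by exact_mod_cast (Nat.le_div_iff_mul_le two_pos).1 hn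
  rw [mul_div_assoc', div_le_div_iff₀ hp two_pos]
  nlinarith [pi_pos]

theorem antitoneOn_inv_sin_mul_pi_div (p : ℕ) [NeZero p] :
    AntitoneOn (fun n : ℕ ↦ (sin (n * (π / p)))⁻¹) (Set.Icc 1 (p / 2)) := by
  intro m hm n hn hmn
  have hp : (0 : ℝ) < p := Nat.cast_pos.2 (NeZero.pos p)
  have hm0 : (0 : ℝ) < m := Nat.cast_pos.2 hm.1
  have hpos : 0 < m * (π / p) := by positivity
  have hmn' : m * (π / p) ≤ n * (π / p) := by gcongr
  have hn2 := mul_pi_div_le_pi_div_two hn.2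
  exact inv_anti₀ (sin_pos_of_pos_of_lt_pi hpos (by linarith [pi_pos]))
    (sin_le_sin_of_le_of_le_pi_div_two (by linarith [pi_pos]) hn2 hmn')

end Trigonometry

section FiniteSums

theorem sum_le_sum_range_card_of_antitoneOn {M : Type*} [AddCommMonoid M] [PartialOrder M]
    [IsOrderedAddMonoid M] {f : ℕ → M} {a b : ℕ} (hf : AntitoneOn f (Set.Icc a b))
    (s : Finset ℕ) (hs : s ⊆ Icc a b) : ∑ m ∈ s, f m ≤ ∑ i ∈ range #s, f (a + i) := by
  induction s using Finset.induction_on_max with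
  | empty => simp
  | insert m s hlt ih =>
    have hm : m ∉ s := fun h ↦ (hlt m h).false
    obtain ⟨hms, hss⟩ := insert_subset_iff.1 hs
    have hm_mem := mem_Icc.1 hms
    have hcard : #s ≤ m - a := by
      rw [← Nat.card_Ico]
      exact card_le_card fun x hx ↦ mem_Ico.2 ⟨(mem_Icc.1 (hss hx)).1, hlt x hx⟩
    rw [sum_insert hm, card_insert_of_notMem hm, sum_range_succ, add_comm]
    exact add_le_add (ih hss) (hf ⟨by omega, by omega⟩ hm_mem (by omega))

theorem sum_sum_eq_sum_of_existsUnique_mem {ι α M : Type*} [Fintype ι] [Fintype α]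
    [AddCommMonoid M] {A : ι → Finset α} (hA : ∀ x, ∃! i, x ∈ A i) (F : α → M) :
    ∑ i, ∑ x ∈ A i, F x = ∑ x, F x := by
  choose c hc hc' using hA
  rw [sum_comm' (t' := univ) (s' := fun x ↦ {c x})]
  · simp
  · intro i x
    simpa using ⟨fun h ↦ hc' x i h, fun h ↦ h ▸ hc x⟩

theorem prod_eq_or_eq_neg_prod {ι R : Type*} [CommRing R] (s : Finset ι) {f g : ι → R}
    (h : ∀ i ∈ s, f i = g i ∨ f i = -g i) :
    ∏ i ∈ s, f i = ∏ i ∈ s, g i ∨ ∏ i ∈ s, f i = -∏ i ∈ s, g i := by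
  classical
  induction s using Finset.induction_on with
  | empty => simp
  | insert a s ha ih =>
    rw [prod_insert ha, prod_insert ha]
    rcases h a (mem_insert_self a s) with hfa | hfa <;>
      rcases ih fun i hi ↦ h i (mem_insert_of_mem hi) with hs | hs <;> simp [hfa, hs]

theorem norm_sum_range_addChar_mul_norm_sub_one {G : Type*} [AddCommGroup G] [Finite G]
    (ψ : AddChar G ℂ) (a v : G) (n : ℕ) :
    ‖∑ t ∈ range n, ψ (a + t • v)‖ * ‖ψ v - 1‖ = ‖ψ (n • v) - 1‖ := by
  have hgeom : (∑ t ∈ range n, ψ (a + t • v)) * (ψ v - 1) = ψ a * (ψ (n • v) - 1) := by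
    simp only [AddChar.map_add_eq_mul, AddChar.map_nsmul_eq_pow, ← mul_sum, mul_assoc,
      geom_sum_mul]
  rw [← norm_mul, hgeom, norm_mul, AddChar.norm_apply, one_mul]

end FiniteSums

section Residues

variable {p : ℕ}

theorem natAbs_valMinAbs_natCast_of_le_half {n : ℕ} (hn : n ≤ p / 2) :
    (n : ZMod p).valMinAbs.natAbs = n := by
  rw [ZMod.valMinAbs_natCast_of_le_half hn, Int.natAbs_natCast]

/-- The distance from `m / n` to `0` in `ℤ/p`, i.e. the least `d` with `m ≡ ± d n`; meaningful only
when `n` is a unit modulo `p`. -/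
def ratioDist (p m n : ℕ) : ℕ :=
  ((m : ZMod p) * (n : ZMod p)⁻¹).valMinAbs.natAbs

theorem ratioDist_self {n : ℕ} (hn : n.Coprime p) (hp : 1 < p) : ratioDist p n n = 1 := by
  rw [ratioDist, ZMod.coe_mul_inv_eq_one n hn, ← Nat.cast_one,
    natAbs_valMinAbs_natCast_of_le_half (by omega)]

variable [NeZero p]

theorem eq_or_eq_neg_natAbs_valMinAbs (v : ZMod p) :
    v = v.valMinAbs.natAbs ∨ v = -v.valMinAbs.natAbs := by
  rw [← ZMod.natAbs_valMinAbs_eq_natAbs_valMinAbs,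
    natAbs_valMinAbs_natCast_of_le_half (ZMod.natAbs_valMinAbs_le v)]

/-- The distance from the `p`-th root of unity `exp (2πiv/p)` to `1`. -/
noncomputable def chord (v : ZMod p) : ℝ :=
  ‖(ZMod.stdAddChar v : ℂ) - 1‖

theorem chord_eq_two_mul_sin (v : ZMod p) :
    chord v = 2 * sin (v.valMinAbs.natAbs * (π / p)) := by
  have hp : (0 : ℝ) < p := Nat.cast_pos.2 (NeZero.pos p)
  have habs : |v.valMinAbs * (π / p)| = v.valMinAbs.natAbs * (π / p) := by
    rw [abs_mul, abs_of_pos (div_pos pi_pos hp), Nat.cast_natAbs, Int.cast_abs]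
  have hle : |v.valMinAbs * (π / p)| ≤ π := by
    linarith [mul_pi_div_le_pi_div_two (ZMod.natAbs_valMinAbs_le v), pi_pos]
  calc chord v = ‖Complex.exp (Complex.I * ↑(2 * (v.valMinAbs * (π / p)))) - 1‖ := by
        rw [chord, ← ZMod.coe_valMinAbs v, ZMod.stdAddChar_coe, ZMod.coe_valMinAbs]
        congr 3
        push_cast
        ring
    _ = 2 * |sin (v.valMinAbs * (π / p))| := by
        rw [Complex.norm_exp_I_mul_ofReal_sub_one, mul_div_cancel_left₀ _ two_ne_zero, norm_mul,
          norm_two, norm_eq_abs]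
    _ = 2 * sin (v.valMinAbs.natAbs * (π / p)) := by
        rw [abs_sin_eq_sin_abs_of_abs_le_pi hle, habs]

theorem chord_neg (v : ZMod p) : chord (-v) = chord v := by
  rw [chord_eq_two_mul_sin, chord_eq_two_mul_sin, ZMod.natAbs_valMinAbs_neg]

theorem chord_pos {v : ZMod p} (hv : v ≠ 0) : 0 < chord v := by
  rw [chord, norm_pos_iff, sub_ne_zero, ← AddChar.map_zero_eq_one (ZMod.stdAddChar (N := p))]
  exact ZMod.injective_stdAddChar.ne hv

/-- The residues modulo `p` of the Beatty sequence `S(p/q, β)`, where `b = ⌊qβ⌋`: since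
`m = ⌊(pn + qβ)/q⌋` means `0 ≤ pn + b - qm < q`, they are the `x` for which the least nonnegative
residue of `b - qx` is less than `q`. -/
def beattyResidues (q : ℕ) (b : ZMod p) : Finset (ZMod p) :=
  {x | (b - q * x).val < q}

theorem mem_beattyResidues {q : ℕ} {b x : ZMod p} :
    x ∈ beattyResidues q b ↔ (b - q * x).val < q := by
  simp [beattyResidues]

theorem mem_beattySet_div_iff {q : ℕ} (hq : 0 < q) (β : ℝ) (m : ℤ) :
    m ∈ beattySet (p / q) β ↔ (m : ZMod p) ∈ beattyResidues q (⌊q * β⌋ : ZMod p) := by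
  have hp : (p : ℤ) ≠ 0 := Nat.cast_ne_zero.2 (NeZero.ne p)
  have hfloor (n : ℤ) : m = ⌊(p : ℝ) / q * n + β⌋ ↔
      0 ≤ ⌊q * β⌋ - q * m + p * n ∧ ⌊q * β⌋ - q * m + p * n < q := by
    have hbeta : (p : ℝ) / q * n + β = (q * β + (p * n : ℤ)) / q := by
      push_cast
      field_simp
      ring
    rw [hbeta, Int.floor_div_natCast, Int.floor_add_intCast, eq_comm,
      Int.ediv_eq_iff_of_pos (by omega)]
    constructor <;> intro h <;> constructor <;> linarith [h.1, h.2]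
  have hval : (m : ZMod p) ∈ beattyResidues q (⌊q * β⌋ : ZMod p) ↔
      (⌊q * β⌋ - q * m) % p < q := by
    rw [mem_beattyResidues, ← Nat.cast_lt (α := ℤ)]
    exact_mod_cast Iff.of_eq (congrArg (· < (q : ℤ)) (ZMod.val_intCast (⌊q * β⌋ - q * m)))
  simp only [beattySet, Set.mem_ofPred_eq, hfloor, hval]
  constructor
  · rintro ⟨n, hn0, hnq⟩
    rw [← Int.add_mul_emod_self_left _ _ n]
    have hquot := mul_nonneg p.cast_nonneg (Int.ediv_nonneg hn0 p.cast_nonneg)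
    rw [Int.emod_def]
    linarith
  · intro h
    refine ⟨-((⌊q * β⌋ - q * m) / p), ?_⟩
    rw [mul_neg, ← sub_eq_add_neg, ← Int.emod_def]
    exact ⟨Int.emod_nonneg _ hp, h⟩

theorem beattyResidues_eq_univ {q : ℕ} (hq : p ≤ q) (b : ZMod p) :
    beattyResidues q b = univ :=
  eq_univ_of_forall fun _ ↦ mem_beattyResidues.2 ((ZMod.val_lt _).trans_le hq)

theorem sum_beattyResidues {M : Type*} [AddCommMonoid M] {q : ℕ} (hcop : q.Coprime p)
    (hq : q ≤ p) (b : ZMod p) (F : ZMod p → M) :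
    ∑ x ∈ beattyResidues q b, F x = ∑ t ∈ range q, F ((q : ZMod p)⁻¹ * (b - t)) := by
  have hinv : (q : ZMod p) * (q : ZMod p)⁻¹ = 1 := ZMod.coe_mul_inv_eq_one q hcop
  have hleft (t : ℕ) : b - q * ((q : ZMod p)⁻¹ * (b - t)) = t := by
    linear_combination (t - b) * hinv
  have hright (x : ZMod p) : (q : ZMod p)⁻¹ * (b - (b - q * x).val) = x := by
    rw [ZMod.natCast_zmod_val]
    linear_combination x * hinv
  refine sum_bij' (fun x _ ↦ (b - q * x).val) (fun t _ ↦ (q : ZMod p)⁻¹ * (b - t)) ?_ ?_ ?_ ?_ ?_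
  · exact fun x hx ↦ mem_range.2 (mem_beattyResidues.1 hx)
  · intro t ht
    rw [mem_beattyResidues, hleft, ZMod.val_cast_of_lt ((mem_range.1 ht).trans_le hq)]
    exact mem_range.1 ht
  · exact fun x _ ↦ hright x
  · intro t ht
    rw [hleft, ZMod.val_cast_of_lt ((mem_range.1 ht).trans_le hq)]
  · exact fun x _ ↦ congrArg F (hright x).symm

theorem beattyResidues_nonempty {q : ℕ} (hq : 0 < q) (hcop : q.Coprime p) (b : ZMod p) :
    (beattyResidues q b).Nonempty := by
  refine ⟨(q : ZMod p)⁻¹ * b, mem_beattyResidues.2 ?_⟩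
  rwa [← mul_assoc, ZMod.coe_mul_inv_eq_one q hcop, one_mul, sub_self, ZMod.val_zero]

theorem card_beattyResidues {q : ℕ} (hcop : q.Coprime p) (hq : q ≤ p) (b : ZMod p) :
    #(beattyResidues q b) = q := by
  rw [card_eq_sum_ones, sum_beattyResidues hcop hq, sum_const, card_range, smul_eq_mul, mul_one]

theorem norm_sum_beattyResidues_mul_chord {q : ℕ} (hcop : q.Coprime p) (hq : q ≤ p)
    (b k : ZMod p) :
    ‖∑ x ∈ beattyResidues q b, (ZMod.stdAddChar (x * k) : ℂ)‖ * chord (k * (q : ZMod p)⁻¹) =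
      chord k := by
  have hinv : (q : ZMod p) * (q : ZMod p)⁻¹ = 1 := ZMod.coe_mul_inv_eq_one q hcop
  have hstep (t : ℕ) :
      (q : ZMod p)⁻¹ * (b - t) * k = (q : ZMod p)⁻¹ * b * k + t • -(k * (q : ZMod p)⁻¹) := by
    rw [nsmul_eq_mul]
    ring
  have htotal : q • -(k * (q : ZMod p)⁻¹) = -k := by
    rw [nsmul_eq_mul]
    linear_combination -k * hinv
  rw [← chord_neg (k * _), ← chord_neg k, sum_beattyResidues hcop hq]
  simp only [hstep, chord]
  rw [norm_sum_range_addChar_mul_norm_sub_one, htotal]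

theorem natCast_eq_ratioDist_mul_or_eq_neg (m : ℕ) {n : ℕ} (hn : n.Coprime p) :
    (m : ZMod p) = ratioDist p m n * n ∨ (m : ZMod p) = -(ratioDist p m n * n) := by
  have hinv : (n : ZMod p) * (n : ZMod p)⁻¹ = 1 := ZMod.coe_mul_inv_eq_one n hn
  rcases eq_or_eq_neg_natAbs_valMinAbs ((m : ZMod p) * (n : ZMod p)⁻¹) with heq | hneg
  · left
    rw [ratioDist]
    linear_combination (n : ZMod p) * heq - m * hinv
  · right
    rw [ratioDist]
    linear_combination (n : ZMod p) * hneg - m * hinv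

theorem natCast_eq_or_eq_neg_of_ratioDist_eq {m n k : ℕ} (hm : m.Coprime p) (hn : n.Coprime p)
    (hk : k.Coprime p) (h : ratioDist p m n = ratioDist p m k) :
    (n : ZMod p) = k ∨ (n : ZMod p) = -k := by
  have hunit (l : ℕ) (hl : l.Coprime p) : IsUnit (l : ZMod p) :=
    (ZMod.isUnit_iff_coprime l p).2 hl
  have hd : IsUnit (ratioDist p m n : ZMod p) := by
    have hm' := hunit m hm
    rcases natCast_eq_ratioDist_mul_or_eq_neg m hn with heq | hneg
    · exact isUnit_of_mul_isUnit_left (heq ▸ hm')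
    · exact isUnit_of_mul_isUnit_left (IsUnit.neg_iff _ |>.1 (hneg ▸ hm'))
  have hmk := natCast_eq_ratioDist_mul_or_eq_neg m hk
  rw [← h] at hmk
  rcases natCast_eq_ratioDist_mul_or_eq_neg m hn with hmn | hmn <;> rcases hmk with hmk | hmk
  · exact .inl (hd.mul_left_cancel (by linear_combination hmk - hmn))
  · exact .inr (hd.mul_left_cancel (by linear_combination hmk - hmn))
  · exact .inr (hd.mul_left_cancel (by linear_combination hmn - hmk))
  · exact .inl (hd.mul_left_cancel (by linear_combination hmn - hmk))

theorem chord_natCast_mul_inv (m n : ℕ) :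
    chord ((m : ZMod p) * (n : ZMod p)⁻¹) = 2 * sin (ratioDist p m n * (π / p)) :=
  chord_eq_two_mul_sin _

end Residues

/-- A partition of `ℤ/p` into the residue sets of Beatty sequences with moduli `p / q i` in lowest
terms, where `b i` plays the role of `⌊q i * β i⌋`. -/
structure IsBeattyPartition {p : ℕ} [NeZero p] {ι : Type*} (q : ι → ℕ) (b : ι → ZMod p) :
    Prop where
  pos : ∀ i, 0 < q i
  coprime : ∀ i, (q i).Coprime p
  existsUnique_mem : ∀ x, ∃! i, x ∈ beattyResidues (q i) (b i)

theorem isBeattyPartition_of_existsUnique_mem_beattySet {p : ℕ} [NeZero p] {ι : Type*} {q : ι → ℕ}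
    (hpos : ∀ i, 0 < q i) (hcop : ∀ i, (q i).Coprime p) {β : ι → ℝ}
    (hcov : ∀ m : ℤ, ∃! i, m ∈ beattySet (p / q i) (β i)) :
    IsBeattyPartition q fun i ↦ (⌊q i * β i⌋ : ZMod p) where
  pos := hpos
  coprime := hcop
  existsUnique_mem x := by
    obtain ⟨m, rfl⟩ := ZMod.intCast_surjective x
    simpa only [mem_beattySet_div_iff (hpos _)] using hcov m

namespace IsBeattyPartition

variable {p : ℕ} [NeZero p] {ι : Type*} {q : ι → ℕ} {b : ι → ZMod p}

theorem isUnit_natCast (h : IsBeattyPartition q b) (i : ι) : IsUnit (q i : ZMod p) :=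
  (ZMod.isUnit_iff_coprime (q i) p).2 (h.coprime i)

theorem lt [Nontrivial ι] (h : IsBeattyPartition q b) (i : ι) : q i < p := by
  by_contra! hle
  obtain ⟨j, hji⟩ := exists_ne i
  obtain ⟨x, hx⟩ := beattyResidues_nonempty (h.pos j) (h.coprime j) (b j)
  have hxi : x ∈ beattyResidues (q i) (b i) := by
    rw [beattyResidues_eq_univ hle]
    exact mem_univ x
  exact hji ((h.existsUnique_mem x).unique hx hxi)

theorem one_lt [Nontrivial ι] (h : IsBeattyPartition q b) : 1 < p := by
  obtain ⟨i⟩ := (inferInstance : Nonempty ι)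
  exact (Nat.succ_le_of_lt (h.pos i)).trans_lt (h.lt i)

theorem natCast_ne_zero [Nontrivial ι] (h : IsBeattyPartition q b) (i : ι) :
    (q i : ZMod p) ≠ 0 := by
  have : Fact (1 < p) := ⟨h.one_lt⟩
  exact (h.isUnit_natCast i).ne_zero

theorem norm_sum_stdAddChar [Nontrivial ι] (h : IsBeattyPartition q b) (i j : ι) :
    ‖∑ x ∈ beattyResidues (q i) (b i), (ZMod.stdAddChar (x * (q j : ZMod p)) : ℂ)‖ =
      chord (q j : ZMod p) / 2 * (sin (ratioDist p (q j) (q i) * (π / p)))⁻¹ := by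
  have hprod := norm_sum_beattyResidues_mul_chord (h.coprime i) (h.lt i).le (b i) (q j)
  have hpos := chord_pos (h.natCast_ne_zero j)
  rw [chord_natCast_mul_inv] at hprod
  have hsin : sin (ratioDist p (q j) (q i) * (π / p)) ≠ 0 := by
    intro h0
    rw [h0, mul_zero, mul_zero] at hprod
    exact hpos.ne hprod
  rw [eq_mul_inv_iff_mul_eq₀ hsin]
  linarith

variable [Fintype ι]

theorem sum_eq [Nontrivial ι] (h : IsBeattyPartition q b) : ∑ i, q i = p := by
  calc ∑ i, q i = ∑ i, ∑ _x ∈ beattyResidues (q i) (b i), 1 := sum_congr rfl fun i _ ↦ by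
        rw [← card_eq_sum_ones, card_beattyResidues (h.coprime i) (h.lt i).le]
    _ = ∑ _x : ZMod p, 1 := sum_sum_eq_sum_of_existsUnique_mem h.existsUnique_mem _
    _ = p := by rw [← card_eq_sum_ones, card_univ, ZMod.card]

theorem eq_of_natCast_eq_or_eq_neg (h : IsBeattyPartition q b) (hq : Function.Injective q)
    (hcard : 3 ≤ Fintype.card ι) {i j : ι}
    (hij : (q i : ZMod p) = q j ∨ (q i : ZMod p) = -q j) : i = j := by
  classical
  have : Nontrivial ι := Fintype.one_lt_card_iff_nontrivial.1 (by omega)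
  rcases hij with heq | hneg
  · refine hq ?_
    rw [← ZMod.val_cast_of_lt (h.lt i), heq, ZMod.val_cast_of_lt (h.lt j)]
  · by_contra hne
    obtain ⟨k, hki, hkj⟩ := ENat.exists_ne_ne_of_three_le (by simpa using hcard) i j
    have hlt : q i + q j < p :=
      calc q i + q j < q k + (q i + q j) := Nat.lt_add_of_pos_left (h.pos k)
        _ = ∑ l ∈ {k, i, j}, q l := by
            rw [sum_insert (by simp [hki, hkj]), sum_pair hne]
        _ ≤ p := (sum_le_univ_sum_of_nonneg fun _ ↦ Nat.zero_le _).trans h.sum_eq.le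
    have hdvd : p ∣ q i + q j := by
      rw [← ZMod.natCast_eq_zero_iff, Nat.cast_add, hneg, neg_add_cancel]
    exact (Nat.le_of_dvd (Nat.add_pos_left (h.pos i) _) hdvd).not_gt hlt

theorem sum_sum_stdAddChar_eq_zero (h : IsBeattyPartition q b) {k : ZMod p} (hk : k ≠ 0) :
    ∑ i, ∑ x ∈ beattyResidues (q i) (b i), (ZMod.stdAddChar (x * k) : ℂ) = 0 := by
  rw [sum_sum_eq_sum_of_existsUnique_mem h.existsUnique_mem fun x ↦ ZMod.stdAddChar (x * k),
    AddChar.sum_mulShift _ (ZMod.isPrimitive_stdAddChar p), if_neg hk, Nat.cast_zero]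

theorem inv_sin_pi_div_le_sum [Nontrivial ι] [DecidableEq ι] (h : IsBeattyPartition q b) (j : ι) :
    (sin (π / p))⁻¹ ≤
      ∑ i ∈ univ.erase j, (sin (ratioDist p (q j) (q i) * (π / p)))⁻¹ := by
  set S : ι → ℂ := fun i ↦ ∑ x ∈ beattyResidues (q i) (b i), ZMod.stdAddChar (x * (q j : ZMod p))
  have hSj : S j = -∑ i ∈ univ.erase j, S i := by
    rw [eq_neg_iff_add_eq_zero, add_sum_erase _ _ (mem_univ j)]
    exact h.sum_sum_stdAddChar_eq_zero (h.natCast_ne_zero j)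
  refine le_of_mul_le_mul_left ?_ (half_pos (chord_pos (h.natCast_ne_zero j)))
  calc chord (q j : ZMod p) / 2 * (sin (π / p))⁻¹ = ‖S j‖ := by
        rw [h.norm_sum_stdAddChar, ratioDist_self (h.coprime j) h.one_lt, Nat.cast_one, one_mul]
    _ ≤ ∑ i ∈ univ.erase j, ‖S i‖ := by
        rw [hSj, norm_neg]
        exact norm_sum_le _ _
    _ = chord (q j : ZMod p) / 2 *
          ∑ i ∈ univ.erase j, (sin (ratioDist p (q j) (q i) * (π / p)))⁻¹ := by
        rw [mul_sum]
        exact sum_congr rfl fun i _ ↦ h.norm_sum_stdAddChar i j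

theorem exists_natCast_eq_two_mul_or_eq_neg (h : IsBeattyPartition q b)
    (hq : Function.Injective q) (hcard : 3 ≤ Fintype.card ι)
    (hsin : ∑ i ∈ range (Fintype.card ι - 1), (sin ((3 + i : ℕ) * (π / p)))⁻¹ < (sin (π / p))⁻¹)
    (j : ι) : ∃ i, (q j : ZMod p) = 2 * q i ∨ (q j : ZMod p) = -(2 * q i) := by
  classical
  have : Nontrivial ι := Fintype.one_lt_card_iff_nontrivial.1 (by omega)
  by_contra! hcon
  set d : ι → ℕ := fun i ↦ ratioDist p (q j) (q i)
  have hd_inj : Function.Injective d := fun i k hik ↦ h.eq_of_natCast_eq_or_eq_neg hq hcard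
    (natCast_eq_or_eq_neg_of_ratioDist_eq (h.coprime j) (h.coprime i) (h.coprime k) hik)
  have hd_ge (i : ι) (hij : i ≠ j) : 3 ≤ d i := by
    by_contra! hlt
    have hdi : (q j : ZMod p) = d i * q i ∨ (q j : ZMod p) = -(d i * q i) :=
      natCast_eq_ratioDist_mul_or_eq_neg (q j) (h.coprime i)
    interval_cases d i
    · exact h.natCast_ne_zero j (by simpa using hdi)
    · exact hij (h.eq_of_natCast_eq_or_eq_neg hq hcard (by simpa using hdi)).symm
    · exact hdi.elim (hcon i).1 (hcon i).2
  have hd_mem : (univ.erase j).image d ⊆ Icc 3 (p / 2) := by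
    simp only [image_subset_iff, mem_erase, mem_Icc]
    exact fun i hi ↦ ⟨hd_ge i hi.1, ZMod.natAbs_valMinAbs_le _⟩
  have hanti := (antitoneOn_inv_sin_mul_pi_div p).mono
    (Set.Icc_subset_Icc_left (show 1 ≤ 3 by norm_num))
  have hle := sum_le_sum_range_card_of_antitoneOn hanti _ hd_mem
  rw [sum_image hd_inj.injOn, card_image_of_injective _ hd_inj, card_erase_of_mem (mem_univ j),
    card_univ] at hle
  exact ((h.inv_sin_pi_div_le_sum j).trans hle).not_gt hsin

theorem two_pow_card_eq_one_or_eq_neg_one (h : IsBeattyPartition q b)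
    (hq : Function.Injective q) (hcard : 3 ≤ Fintype.card ι)
    (hdouble : ∀ j, ∃ i, (q j : ZMod p) = 2 * q i ∨ (q j : ZMod p) = -(2 * q i)) :
    (2 : ZMod p) ^ Fintype.card ι = 1 ∨ (2 : ZMod p) ^ Fintype.card ι = -1 := by
  choose f hf using hdouble
  have hf_inj : Function.Injective f := by
    intro i j hij
    refine h.eq_of_natCast_eq_or_eq_neg hq hcard ?_
    have hi := hf i
    rw [hij] at hi
    rcases hi with hi | hi <;> rcases hf j with hj | hj <;> simp [hi, hj]
  have hprod : ∏ j, 2 * (q (f j) : ZMod p) = 2 ^ Fintype.card ι * ∏ j, (q j : ZMod p) := by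
    rw [prod_mul_distrib, prod_const, card_univ,
      hf_inj.bijective_of_finite.prod_comp fun j ↦ (q j : ZMod p)]
  have hunit : IsUnit (∏ j, (q j : ZMod p)) := by
    simpa only [IsUnit.prod_univ_iff] using h.isUnit_natCast
  have hcases := prod_eq_or_eq_neg_prod univ fun j _ ↦ hf j
  rw [hprod] at hcases
  rcases hcases with hpos | hneg
  · left
    exact hunit.mul_right_cancel (by linear_combination -hpos)
  · right
    exact hunit.mul_right_cancel (by linear_combination hneg)

end IsBeattyPartition

theorem sum_inv_sin_three_add_lt {p : ℕ} (hp : 11 ≤ p) :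
    ∑ i ∈ range 3, (sin ((3 + i : ℕ) * (π / p)))⁻¹ < (sin (π / p))⁻¹ := by
  have hp' : (11 : ℝ) ≤ p := by exact_mod_cast hp
  have hle : π / p ≤ 2 / 7 := by
    rw [div_le_iff₀ (by linarith)]
    linarith [pi_lt_d4]
  have hpos : 0 < π / p := by positivity
  simpa [sum_range_succ, -Nat.cast_add] using inv_sin_three_four_five_mul_lt hpos hle

section FourSequences

variable {a b c d : ℕ}

theorem eleven_le_add_of_coprime (hba : b < a) (hcb : c < b) (hdc : d < c) (hd : 0 < d)
    (hcop : a.Coprime (a + b + c + d)) : 11 ≤ a + b + c + d := by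
  by_contra! hlt
  obtain ⟨rfl, rfl, rfl, rfl⟩ : a = 4 ∧ b = 3 ∧ c = 2 ∧ d = 1 := by omega
  norm_num at hcop

theorem eq_fifteen_or_eq_seventeen_of_two_pow_four {p : ℕ} (hp : 11 ≤ p)
    (h : (2 : ZMod p) ^ 4 = 1 ∨ (2 : ZMod p) ^ 4 = -1) : p = 15 ∨ p = 17 := by
  have hdvd : p ∣ 15 ∨ p ∣ 17 := by
    simp only [← ZMod.natCast_eq_zero_iff]
    push_cast
    exact h.imp (fun h ↦ by linear_combination h) (fun h ↦ by linear_combination h)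
  rcases hdvd with hdvd | hdvd <;> have hle := Nat.le_of_dvd (by norm_num) hdvd <;>
    interval_cases p <;> omega

theorem eq_of_coprime_fifteen (hba : b < a) (hcb : c < b) (hdc : d < c) (hd : 0 < d)
    (hsum : a + b + c + d = 15) (hcop : ∀ i, (![a, b, c, d] i).Coprime 15) :
    a = 8 ∧ b = 4 ∧ c = 2 ∧ d = 1 := by
  have hd2 : d ≤ 2 := by omega
  have hc4 : c ≤ 4 := by omega
  have hb6 : b ≤ 6 := by omega
  obtain rfl : a = 15 - b - c - d := by omega
  interval_cases d <;> interval_cases c <;> interval_cases b <;>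
    first | omega | (revert hcop; decide)

theorem not_forall_eq_two_mul_or_eq_neg_mod_seventeen (hba : b < a) (hcb : c < b) (hdc : d < c)
    (hd : 0 < d) (hsum : a + b + c + d = 17) :
    ¬∀ j, ∃ i, (![a, b, c, d] j : ZMod 17) = 2 * ![a, b, c, d] i ∨
      (![a, b, c, d] j : ZMod 17) = -(2 * ![a, b, c, d] i) := by
  have hd2 : d ≤ 2 := by omega
  have hc4 : c ≤ 4 := by omega
  have hb7 : b ≤ 7 := by omega
  obtain rfl : a = 17 - b - c - d := by omega
  interval_cases d <;> interval_cases c <;> interval_cases b <;> first | omega | decide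

end FourSequences

theorem fraenkel_four_q2_eq_two_q3_general {p q1 q2 q3 q4 : ℕ} (hp : 0 < p)
    (h12 : q2 < q1) (h23 : q3 < q2) (h34 : q4 < q3) (h4 : 0 < q4)
    (hcop : ∀ i, (![q1, q2, q3, q4] i).Coprime p) {β : Fin 4 → ℝ}
    (hcov : ∀ m : ℤ, ∃! i, m ∈ beattySet (p / (![q1, q2, q3, q4] i : ℕ)) (β i)) :
    p = 15 ∧ q1 = 8 ∧ q2 = 4 ∧ q3 = 2 ∧ q4 = 1 := by
  have : NeZero p := ⟨hp.ne'⟩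
  have hanti : StrictAnti ![q1, q2, q3, q4] := by simp [h12, h23, h34]
  have hpos (i : Fin 4) : 0 < ![q1, q2, q3, q4] i := h4.trans_le (hanti.antitone (Fin.le_last i))
  have hpart := isBeattyPartition_of_existsUnique_mem_beattySet hpos hcop hcov
  have hsum : q1 + q2 + q3 + q4 = p := by simpa [Fin.sum_univ_four] using hpart.sum_eq
  have hp11 : 11 ≤ p := hsum ▸ eleven_le_add_of_coprime h12 h23 h34 h4 (hsum ▸ hcop 0)
  have hdouble := hpart.exists_natCast_eq_two_mul_or_eq_neg hanti.injective (by simp)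
    (sum_inv_sin_three_add_lt hp11)
  have hpow := hpart.two_pow_card_eq_one_or_eq_neg_one hanti.injective (by simp) hdouble
  rcases eq_fifteen_or_eq_seventeen_of_two_pow_four hp11 hpow with rfl | rfl
  · exact ⟨rfl, eq_of_coprime_fifteen h12 h23 h34 h4 hsum hcop⟩
  · exact (not_forall_eq_two_mul_or_eq_neg_mod_seventeen h12 h23 h34 h4 hsum hdouble).elim

/-- If the four rational Beatty sequences `S(p/qᵢ, βᵢ)` form a disjoint
covering system of the integers, with `q₁ > q₂ > q₃ > q₄ ≥ 1` and
`gcd(p, qᵢ) = 1`, then `q2 = 2 * q3`. -/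
theorem fraenkel_four_q2_eq_two_q3 (p q1 q2 q3 q4 : ℕ) (hp : 0 < p)
    (h12 : q2 < q1) (h23 : q3 < q2) (h34 : q4 < q3) (h4 : 1 ≤ q4)
    (hg1 : Nat.gcd p q1 = 1) (hg2 : Nat.gcd p q2 = 1)
    (hg3 : Nat.gcd p q3 = 1) (hg4 : Nat.gcd p q4 = 1)
    (β : Fin 4 → ℝ)
    (hcov : ∀ m : ℤ, ∃! i : Fin 4,
      m ∈ beattySet ((p : ℝ) / ((![q1, q2, q3, q4] i : ℕ) : ℝ)) (β i)) :
    q2 = 2 * q3 := by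
  have hcop (i : Fin 4) : (![q1, q2, q3, q4] i).Coprime p := by
    fin_cases i <;> exact Nat.Coprime.symm ‹_›
  obtain ⟨-, -, rfl, rfl, -⟩ := fraenkel_four_q2_eq_two_q3_general hp h12 h23 h34 h4 hcop hcov
  rfl
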